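/- arXiv:2012.11141 — 2 statements merged into one kernel-verified Lean document; each statement's English description precedes it below -/
import Mathlib

section
/- For every real a > 0 and every positive integer n, any n-kink φ is symmetric with respect to its midpoint: φ(r) + φ(−r) = n·π for all r ∈ ℝ; in particular φ(0) = n·π/2. -/
open Real Filter

/-!
With the energy `E = φ'² / 2 - sin² φ`, the quantity `K = (r² + a²)² E` satisfies
`K' = -4 r (r² + a²) sin² φ`. Parametrise an increasing kink on the half-line `r ≥ 0` by the value
`u = φ` instead of `r`: then `(r, -K)` solves a cooperative planar system in `u`, so for two kinks
`f`, `g` the inequalities `r_f < r_g` and `K_f > K_g` propagate and both gaps are nondecreasing in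
`u`. As `K` cannot stay bounded away from `0` along a kink, this is impossible; hence two kinks with
the same energy at `r = 0` agree at `r = 0`. A kink and its reflection through the midpoint have
the same slope and the same energy at `0`, so they have the same Cauchy data and coincide.
-/

section Calculus

theorem antitoneOn_of_hasDerivAt_nonpos {D : Set ℝ} (hD : Convex ℝ D) {f f' : ℝ → ℝ}
    (hf : ∀ x ∈ D, HasDerivAt f (f' x) x) (hf' : ∀ x ∈ interior D, f' x ≤ 0) :
    AntitoneOn f D :=
  antitoneOn_of_hasDerivWithinAt_nonpos hD (fun x hx => (hf x hx).continuousAt.continuousWithinAt)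
    (fun x hx => (hf x (interior_subset hx)).hasDerivWithinAt) hf'

theorem monotoneOn_of_hasDerivAt_nonneg {D : Set ℝ} (hD : Convex ℝ D) {f f' : ℝ → ℝ}
    (hf : ∀ x ∈ D, HasDerivAt f (f' x) x) (hf' : ∀ x ∈ interior D, 0 ≤ f' x) :
    MonotoneOn f D :=
  monotoneOn_of_hasDerivWithinAt_nonneg hD (fun x hx => (hf x hx).continuousAt.continuousWithinAt)
    (fun x hx => (hf x (interior_subset hx)).hasDerivWithinAt) hf'

theorem tendsto_atBot_of_hasDerivAt_le_neg {f f' : ℝ → ℝ} {c : ℝ}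
    (hf : ∀ x, HasDerivAt f (f' x) x) (hc : c < 0) (hf' : ∀ᶠ x in atTop, f' x ≤ c) :
    Tendsto f atTop atBot := by
  obtain ⟨x₀, hx₀⟩ := eventually_atTop.1 hf'
  have hline : Tendsto (fun x => f x₀ + c * (x - x₀)) atTop atBot :=
    tendsto_atBot_add_const_left _ _
      ((tendsto_atTop_add_const_right _ (-x₀) tendsto_id).const_mul_atTop_of_neg hc)
  refine tendsto_atBot_mono' _ ?_ hline
  filter_upwards [eventually_ge_atTop x₀] with x hx
  have hdiff : Differentiable ℝ f := fun x => (hf x).differentiableAt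
  have := (convex_Ici x₀).image_sub_le_mul_sub_of_deriv_le hdiff.continuous.continuousOn
    hdiff.differentiableOn
    (fun y hy => (hf y).deriv.trans_le (hx₀ y (interior_subset hy))) x₀ Set.self_mem_Ici x hx hx
  linarith

theorem eventually_div_le_sub_of_tendsto {f f' : ℝ → ℝ} {c l : ℝ}
    (hf : ∀ x, HasDerivAt f (f' x) x) (hlim : Tendsto f atTop (nhds l))
    (hf' : ∀ᶠ x in atTop, c / x ^ 2 ≤ f' x) :
    ∀ᶠ x in atTop, c / x ≤ l - f x := by
  obtain ⟨x₀, hx₀⟩ := eventually_atTop.1 (hf'.and (eventually_gt_atTop 0))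
  have hderiv : ∀ x ∈ Set.Ici x₀, HasDerivAt (fun x => f x + c / x) (f' x - c / x ^ 2) x := by
    intro x hx
    refine ((hf x).add ((hasDerivAt_inv (hx₀ x hx).2.ne').const_mul c)).congr_deriv ?_
    ring
  have hmono : MonotoneOn (fun x => f x + c / x) (Set.Ici x₀) :=
    monotoneOn_of_hasDerivAt_nonneg (convex_Ici x₀) hderiv
      fun x hx => sub_nonneg.2 (hx₀ x (interior_subset hx)).1
  have hsum : Tendsto (fun x => f x + c / x) atTop (nhds l) := by
    simpa using hlim.add ((tendsto_const_nhds (x := c)).div_atTop tendsto_id)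
  filter_upwards [eventually_ge_atTop x₀] with x hx
  have : f x + c / x ≤ l :=
    ge_of_tendsto hsum ((eventually_ge_atTop x).mono fun y hy => hmono hx (hx.trans hy) hy)
  linarith

theorem exists_hasDerivAt_comp_eq {f f' g g' : ℝ → ℝ} (hf : ∀ x, HasDerivAt f (f' x) x)
    (hg : ∀ x, HasDerivAt g (g' x) x) (hg' : Continuous g') (hpos : ∀ x, 0 < g' x)
    (hfg : ∀ x, f x ∈ Set.range g) :
    ∃ τ : ℝ → ℝ, (∀ x, g (τ x) = f x) ∧ ∀ x, HasDerivAt τ (f' x / g' (τ x)) x := by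
  have hcont : Continuous g := continuous_iff_continuousAt.2 fun x => (hg x).continuousAt
  have hopen : IsOpenMap g := isOpenMap_of_hasStrictDerivAt
    (fun x => hasStrictDerivAt_of_hasDerivAt_of_continuousAt (.of_forall hg) hg'.continuousAt)
    fun x => (hpos x).ne'
  have hemb : Topology.IsOpenEmbedding g := .of_continuous_injective_isOpenMap hcont
    (strictMono_of_hasDerivAt_pos hg hpos).injective hopen
  let e := hemb.toOpenPartialHomeomorph g
  have htarget : ∀ x, f x ∈ e.target := by simpa [e] using hfg
  refine ⟨e.symm ∘ f, fun x => e.right_inv (htarget x), fun x => ?_⟩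
  refine ((e.hasDerivAt_symm (htarget x) (hpos _).ne' (hg _)).comp x (hf x)).congr_deriv ?_
  rw [div_eq_inv_mul, Function.comp_apply]

/- Continuous induction: as long as both functions have not dropped below their positive initial
values, they are positive on a right neighbourhood, hence nondecreasing there. -/
theorem le_and_le_of_hasDerivAt_nonneg_of_pos {u v u' v' : ℝ → ℝ} {x₀ : ℝ}
    (hu : ∀ x, HasDerivAt u (u' x) x) (hv : ∀ x, HasDerivAt v (v' x) x)
    (hu₀ : 0 < u x₀) (hv₀ : 0 < v x₀)
    (h : ∀ x, x₀ ≤ x → 0 < u x → 0 < v x → 0 ≤ u' x ∧ 0 ≤ v' x) {x : ℝ} (hx : x₀ ≤ x) :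
    u x₀ ≤ u x ∧ v x₀ ≤ v x := by
  have hcu : Continuous u := continuous_iff_continuousAt.2 fun x => (hu x).continuousAt
  have hcv : Continuous v := continuous_iff_continuousAt.2 fun x => (hv x).continuousAt
  let s : Set ℝ := {y | u x₀ ≤ u y ∧ v x₀ ≤ v y}
  have hclosed : IsClosed s :=
    (isClosed_le continuous_const hcu).inter (isClosed_le continuous_const hcv)
  suffices Set.Icc x₀ x ⊆ s from this ⟨hx, le_rfl⟩
  refine (hclosed.inter isClosed_Icc).Icc_subset_of_forall_mem_nhdsWithin ⟨le_rfl, le_rfl⟩ ?_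
  rintro y ⟨⟨hyu, hyv⟩, hy, -⟩
  have hpos : ∀ᶠ z in nhds y, 0 < u z ∧ 0 < v z :=
    (hcu.continuousAt.eventually (lt_mem_nhds (hu₀.trans_le hyu))).and
      (hcv.continuousAt.eventually (lt_mem_nhds (hv₀.trans_le hyv)))
  obtain ⟨z, hz, hyz⟩ := mem_nhdsGE_iff_exists_Ico_subset.1 (mem_nhdsWithin_of_mem_nhds hpos)
  have hderiv : ∀ w ∈ interior (Set.Ico y z), 0 ≤ u' w ∧ 0 ≤ v' w := fun w hw =>
    have hw := interior_subset hw
    h w (hy.trans hw.1) (hyz hw).1 (hyz hw).2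
  have hmu : MonotoneOn u (Set.Ico y z) :=
    monotoneOn_of_hasDerivAt_nonneg (convex_Ico y z) (fun w _ => hu w) fun w hw => (hderiv w hw).1
  have hmv : MonotoneOn v (Set.Ico y z) :=
    monotoneOn_of_hasDerivAt_nonneg (convex_Ico y z) (fun w _ => hv w) fun w hw => (hderiv w hw).2
  have hy_mem : y ∈ Set.Ico y z := ⟨le_rfl, hz⟩
  filter_upwards [Ioo_mem_nhdsGT hz] with w hw
  have hw_mem : w ∈ Set.Ico y z := Set.Ioo_subset_Ico_self hw
  exact ⟨hyu.trans (hmu hy_mem hw_mem hw.1.le), hyv.trans (hmv hy_mem hw_mem hw.1.le)⟩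

end Calculus

section ZerosOfSine

variable {c : ℝ}

theorem sin_sub_of_sin_eq_zero (hc : sin c = 0) (x : ℝ) : sin (c - x) = -(cos c * sin x) := by
  rw [sin_sub, hc]; ring

theorem sin_sub_sq_of_sin_eq_zero (hc : sin c = 0) (x : ℝ) : sin (c - x) ^ 2 = sin x ^ 2 := by
  have hcos : cos c ^ 2 = 1 := by rw [cos_sq', hc]; ring
  rw [sin_sub_of_sin_eq_zero hc, neg_sq, mul_pow, hcos, one_mul]

theorem sin_two_mul_sub_of_sin_eq_zero (hc : sin c = 0) (x : ℝ) :
    sin (2 * (c - x)) = -sin (2 * x) := by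
  have hcos : cos c ^ 2 = 1 := by rw [cos_sq', hc]; ring
  rw [sin_two_mul, sin_two_mul, sin_sub_of_sin_eq_zero hc, cos_sub, hc]
  linear_combination (-2 * sin x * cos x) * hcos

end ZerosOfSine

/-- `φ` solves the wormhole kink equation `φ'' + 2r / (r² + a²) φ' = sin (2φ)` with derivative
`p = φ'`; carrying `p` along puts the equation in first-order form. -/
structure IsWormholeSolution (a : ℝ) (φ p : ℝ → ℝ) : Prop where
  hasDerivAt (r : ℝ) : HasDerivAt φ (p r) r
  hasDerivAt_deriv (r : ℝ) : HasDerivAt p (sin (2 * φ r) - 2 * r / (r ^ 2 + a ^ 2) * p r) r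

/-- The energy `p² / 2 - sin² φ`, which the friction term dissipates for `r > 0`. -/
noncomputable def wormholeEnergy (φ p : ℝ → ℝ) (r : ℝ) : ℝ := p r ^ 2 / 2 - sin (φ r) ^ 2

/-- The energy times `(r² + a²)²`, the weight which removes `p` from its derivative. -/
noncomputable def weightedEnergy (a : ℝ) (φ p : ℝ → ℝ) (r : ℝ) : ℝ :=
  (r ^ 2 + a ^ 2) ^ 2 * wormholeEnergy φ p r

theorem abs_two_mul_div_sq_add_sq_le {a : ℝ} (ha : a ≠ 0) (r : ℝ) :
    |2 * r / (r ^ 2 + a ^ 2)| ≤ 1 / |a| := by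
  rw [abs_div, abs_of_pos (by positivity : 0 < r ^ 2 + a ^ 2),
    div_le_div_iff₀ (by positivity) (by positivity), abs_mul, abs_two]
  nlinarith [sq_nonneg (|r| - |a|), sq_abs r, sq_abs a]

theorem lipschitzWith_wormholeField {a : ℝ} (ha : a ≠ 0) (r : ℝ) :
    LipschitzWith (2 + 1 / nnabs a)
      fun x : ℝ × ℝ => (x.2, sin (2 * x.1) - 2 * r / (r ^ 2 + a ^ 2) * x.2) := by
  refine LipschitzWith.of_dist_le_mul fun x y => ?_
  have hfst : |x.1 - y.1| ≤ dist x y := le_max_left _ _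
  have hsnd : |x.2 - y.2| ≤ dist x y := le_max_right _ _
  have hsin : |sin (2 * x.1) - sin (2 * y.1)| ≤ 2 * dist x y := by
    refine (abs_sin_sub_sin_le _ _).trans ?_
    rw [← mul_sub, abs_mul, abs_two]
    gcongr
  have hfriction : |2 * r / (r ^ 2 + a ^ 2) * x.2 - 2 * r / (r ^ 2 + a ^ 2) * y.2|
      ≤ 1 / |a| * dist x y := by
    rw [← mul_sub, abs_mul]
    exact mul_le_mul (abs_two_mul_div_sq_add_sq_le ha r) hsnd (abs_nonneg _) (by positivity)
  have hK : ((2 + 1 / nnabs a : NNReal) : ℝ) = 2 + 1 / |a| := by simp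
  rw [hK, Prod.dist_eq, max_le_iff, dist_eq, dist_eq, add_mul]
  constructor
  · have : 0 ≤ 1 / |a| * dist x y := by positivity
    linarith [dist_nonneg (x := x) (y := y)]
  · rw [sub_sub_sub_comm]
    exact (abs_sub _ _).trans (add_le_add hsin hfriction)

theorem energy_le_of_weightedEnergy_le {a r s : ℝ} (ha : a ≠ 0) {f p g q : ℝ → ℝ} (hr : 0 ≤ r)
    (hrs : r ≤ s) (hE : 0 ≤ wormholeEnergy g q s)
    (hK : weightedEnergy a g q s ≤ weightedEnergy a f p r) :
    wormholeEnergy g q s ≤ wormholeEnergy f p r := by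
  refine le_of_mul_le_mul_left ?_ (by positivity : 0 < (r ^ 2 + a ^ 2) ^ 2)
  calc (r ^ 2 + a ^ 2) ^ 2 * wormholeEnergy g q s
      ≤ (s ^ 2 + a ^ 2) ^ 2 * wormholeEnergy g q s := by gcongr
    _ ≤ (r ^ 2 + a ^ 2) ^ 2 * wormholeEnergy f p r := hK

theorem deriv_le_of_energy_le {f p g q : ℝ → ℝ} {r s : ℝ} (hfg : g s = f r) (hp : 0 ≤ p r)
    (hE : wormholeEnergy g q s ≤ wormholeEnergy f p r) : q s ≤ p r := by
  rw [wormholeEnergy, wormholeEnergy, hfg] at hE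
  exact le_of_sq_le_sq (by linarith) hp

namespace IsWormholeSolution

variable {a c r : ℝ} {φ p ψ f g q : ℝ → ℝ}

theorem eq_of_eq_at (ha : a ≠ 0) (hφ : IsWormholeSolution a φ p) (hψ : IsWormholeSolution a ψ q)
    (h : φ r = ψ r) (h' : p r = q r) : φ = ψ := by
  have hpair : (fun t => (φ t, p t)) = fun t => (ψ t, q t) :=
    ODE_solution_unique_univ (t₀ := r)
      (fun t => (lipschitzWith_wormholeField ha t).lipschitzOnWith (s := Set.univ))
      (fun t => ⟨(hφ.hasDerivAt t).prodMk (hφ.hasDerivAt_deriv t), trivial⟩)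
      (fun t => ⟨(hψ.hasDerivAt t).prodMk (hψ.hasDerivAt_deriv t), trivial⟩) (Prod.ext h h')
  exact funext fun t => congrArg Prod.fst (congrFun hpair t)

theorem const (hc : sin c = 0) : IsWormholeSolution a (fun _ => c) fun _ => 0 where
  hasDerivAt r := hasDerivAt_const r c
  hasDerivAt_deriv r := (hasDerivAt_const r (0 : ℝ)).congr_deriv (by simp [sin_two_mul, hc])

theorem comp_neg (h : IsWormholeSolution a φ p) :
    IsWormholeSolution a (fun r => φ (-r)) fun r => -p (-r) where
  hasDerivAt r :=
    ((h.hasDerivAt (-r)).comp r (hasDerivAt_neg r)).congr_deriv (mul_neg_one _)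
  hasDerivAt_deriv r := by
    refine ((h.hasDerivAt_deriv (-r)).comp r (hasDerivAt_neg r)).neg.congr_deriv ?_
    rw [neg_sq]
    ring

theorem const_sub (h : IsWormholeSolution a φ p) (hc : sin c = 0) :
    IsWormholeSolution a (fun r => c - φ r) fun r => -p r where
  hasDerivAt r := (h.hasDerivAt r).const_sub c
  hasDerivAt_deriv r := by
    refine (h.hasDerivAt_deriv r).neg.congr_deriv ?_
    rw [sin_two_mul_sub_of_sin_eq_zero hc]
    ring

theorem continuous_deriv (h : IsWormholeSolution a φ p) : Continuous p :=
  continuous_iff_continuousAt.2 fun r => (h.hasDerivAt_deriv r).continuousAt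

theorem hasDerivAt_energy (h : IsWormholeSolution a φ p) (r : ℝ) :
    HasDerivAt (wormholeEnergy φ p) (-(2 * r / (r ^ 2 + a ^ 2) * p r ^ 2)) r := by
  refine ((((h.hasDerivAt_deriv r).pow 2).div_const 2).sub
    ((h.hasDerivAt r).sin.pow 2)).congr_deriv ?_
  rw [sin_two_mul]
  push_cast
  ring

theorem hasDerivAt_weightedEnergy (ha : a ≠ 0) (h : IsWormholeSolution a φ p) (r : ℝ) :
    HasDerivAt (weightedEnergy a φ p) (-(4 * r * (r ^ 2 + a ^ 2) * sin (φ r) ^ 2)) r := by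
  refine (((((hasDerivAt_id r).pow 2).add_const (a ^ 2)).pow 2).mul
    (h.hasDerivAt_energy r)).congr_deriv ?_
  have hne : r ^ 2 + a ^ 2 ≠ 0 := by positivity
  simp only [wormholeEnergy, id_eq, Pi.pow_apply]
  push_cast
  field_simp
  ring

theorem hasDerivAt_flux (ha : a ≠ 0) (h : IsWormholeSolution a φ p) (r : ℝ) :
    HasDerivAt (fun r => (r ^ 2 + a ^ 2) * p r) ((r ^ 2 + a ^ 2) * sin (2 * φ r)) r := by
  refine ((((hasDerivAt_id r).pow 2).add_const (a ^ 2)).mul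
    (h.hasDerivAt_deriv r)).congr_deriv ?_
  have hne : r ^ 2 + a ^ 2 ≠ 0 := by positivity
  simp only [id_eq, Pi.pow_apply]
  push_cast
  field_simp
  ring

theorem antitoneOn_energy (h : IsWormholeSolution a φ p) :
    AntitoneOn (wormholeEnergy φ p) (Set.Ici 0) := by
  refine antitoneOn_of_hasDerivAt_nonpos (convex_Ici 0) (fun r _ => h.hasDerivAt_energy r) ?_
  intro r hr
  have hr : 0 ≤ r := interior_subset hr
  exact neg_nonpos.2 (by positivity)

theorem antitoneOn_weightedEnergy (ha : a ≠ 0) (h : IsWormholeSolution a φ p) :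
    AntitoneOn (weightedEnergy a φ p) (Set.Ici 0) := by
  refine antitoneOn_of_hasDerivAt_nonpos (convex_Ici 0)
    (fun r _ => h.hasDerivAt_weightedEnergy ha r) ?_
  intro r hr
  have hr : 0 ≤ r := interior_subset hr
  exact neg_nonpos.2 (by positivity)

theorem strictAntiOn_weightedEnergy (ha : a ≠ 0) (h : IsWormholeSolution a φ p)
    (hp : ∀ r, 0 < p r) : StrictAntiOn (weightedEnergy a φ p) (Set.Ici 0) := by
  intro x hx y hy hxy
  have hanti := h.antitoneOn_weightedEnergy ha
  refine (hanti hx hy hxy.le).lt_of_ne fun heq => ?_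
  have hnonneg : ∀ z ∈ Set.Ioo x y, 0 ≤ z := fun z hz => hx.trans hz.1.le
  have hconst : ∀ z ∈ Set.Ioo x y, weightedEnergy a φ p z = weightedEnergy a φ p x := fun z hz =>
    le_antisymm (hanti hx (hnonneg z hz) hz.1.le) (heq ▸ hanti (hnonneg z hz) hy hz.2.le)
  have hsin : ∀ z ∈ Set.Ioo x y, sin (φ z) = 0 := by
    intro z hz
    have hpos : 0 < z := hx.trans_lt hz.1
    have hzero := (h.hasDerivAt_weightedEnergy ha z).unique <|
      (hasDerivAt_const z (weightedEnergy a φ p x)).congr_of_eventuallyEq <|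
        eventually_of_mem (Ioo_mem_nhds hz.1 hz.2) hconst
    have hne : 4 * z * (z ^ 2 + a ^ 2) ≠ 0 := by positivity
    exact pow_eq_zero_iff two_ne_zero |>.1 <| (mul_eq_zero.1 (neg_eq_zero.1 hzero)).resolve_left hne
  obtain ⟨z, hz⟩ := Set.nonempty_Ioo.2 hxy
  have hzero : cos (φ z) * p z = 0 := (h.hasDerivAt z).sin.unique <|
    (hasDerivAt_const z (0 : ℝ)).congr_of_eventuallyEq <|
      eventually_of_mem (Ioo_mem_nhds hz.1 hz.2) hsin
  have hcos : cos (φ z) = 0 := (mul_eq_zero.1 hzero).resolve_right (hp z).ne'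
  simpa [hsin z hz, hcos] using sin_sq_add_cos_sq (φ z)

theorem energy_nonneg (h : IsWormholeSolution a φ p) (hc : sin c = 0)
    (hlim : Tendsto φ atTop (nhds c)) (hr : 0 ≤ r) : 0 ≤ wormholeEnergy φ p r := by
  have hsin : Tendsto (fun s => -sin (φ s) ^ 2) atTop (nhds 0) := by
    simpa [hc] using ((continuous_sin.tendsto c).comp hlim).pow 2 |>.neg
  refine le_of_tendsto hsin ?_
  filter_upwards [eventually_ge_atTop r] with s hs
  calc -sin (φ s) ^ 2 ≤ wormholeEnergy φ p s := by
        rw [wormholeEnergy]; linarith [sq_nonneg (p s)]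
    _ ≤ wormholeEnergy φ p r := h.antitoneOn_energy hr (hr.trans hs) hs

theorem exists_eq_const_of_energy_eq_zero (ha : a ≠ 0) (h : IsWormholeSolution a φ p)
    (hc : sin c = 0) (hlim : Tendsto φ atTop (nhds c)) (hr : 0 ≤ r)
    (hE : wormholeEnergy φ p r = 0) : ∃ d, φ = fun _ => d := by
  have hzero : ∀ s, r ≤ s → wormholeEnergy φ p s = 0 := fun s hs =>
    le_antisymm (hE ▸ h.antitoneOn_energy hr (hr.trans hs) hs)
      (h.energy_nonneg hc hlim (hr.trans hs))
  have hr₁ : r < r + 1 := lt_add_one r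
  have hderiv := (h.hasDerivAt_energy (r + 1)).unique <|
    (hasDerivAt_const (r + 1) (0 : ℝ)).congr_of_eventuallyEq <|
      (eventually_ge_nhds hr₁).mono hzero
  have hfriction : 2 * (r + 1) / ((r + 1) ^ 2 + a ^ 2) ≠ 0 := by positivity
  have hp : p (r + 1) = 0 := pow_eq_zero_iff two_ne_zero |>.1 <|
    (mul_eq_zero.1 (neg_eq_zero.1 hderiv)).resolve_left hfriction
  have hsin : sin (φ (r + 1)) = 0 := by
    simpa [wormholeEnergy, hp] using hzero (r + 1) hr₁.le
  exact ⟨φ (r + 1), h.eq_of_eq_at ha (const hsin) rfl hp⟩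

/- A flux bounded below by `k > 0` forces `c - φ ≥ k / (2r)`, hence
`(r² + a²) sin (2φ) ≤ -(2k / π) r`, and the flux would tend to `-∞`. -/
theorem not_eventually_le_flux (ha : a ≠ 0) (h : IsWormholeSolution a φ p) (hc : sin c = 0)
    (hlim : Tendsto φ atTop (nhds c)) {k : ℝ} (hk : 0 < k) :
    ¬ ∀ᶠ r in atTop, k ≤ (r ^ 2 + a ^ 2) * p r := by
  intro hflux
  have hp : ∀ᶠ r in atTop, k / 2 / r ^ 2 ≤ p r := by
    filter_upwards [hflux, eventually_ge_atTop |a|, eventually_gt_atTop 0] with r hr har hr₀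
    have hsq : a ^ 2 ≤ r ^ 2 := sq_le_sq.2 (har.trans (le_abs_self r))
    have hpos : 0 < p r := (pos_iff_pos_of_mul_pos (hk.trans_le hr)).1 (by positivity)
    rw [div_le_iff₀ (pow_pos hr₀ 2)]
    nlinarith
  have hgap : ∀ᶠ r in atTop, k / 2 / r ≤ c - φ r :=
    eventually_div_le_sub_of_tendsto h.hasDerivAt hlim hp
  have hsmall : ∀ᶠ r in atTop, c - φ r ≤ π / 4 :=
    (hlim.const_sub c).eventually_le_const (by rw [sub_self]; positivity)
  have hderiv : ∀ᶠ r in atTop, (r ^ 2 + a ^ 2) * sin (2 * φ r) ≤ -(2 * k / π) := by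
    filter_upwards [hgap, hsmall, eventually_ge_atTop 1] with r hr hrπ hr₁
    have hr₀ : 0 < r := zero_lt_one.trans_le hr₁
    have hgap₀ : 0 ≤ c - φ r := (div_pos (half_pos hk) hr₀).le.trans hr
    have hsin : 2 * k / π / r ≤ sin (2 * (c - φ r)) := calc
      2 * k / π / r = 2 / π * (2 * (k / 2 / r)) := by ring
      _ ≤ 2 / π * (2 * (c - φ r)) := by gcongr
      _ ≤ sin (2 * (c - φ r)) := mul_le_sin (by linarith) (by linarith)
    have hmul : 2 * k / π ≤ (r ^ 2 + a ^ 2) * sin (2 * (c - φ r)) := calc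
      2 * k / π ≤ 2 * k / π * r := le_mul_of_one_le_right (by positivity) hr₁
      _ = r ^ 2 * (2 * k / π / r) := by field_simp
      _ ≤ (r ^ 2 + a ^ 2) * sin (2 * (c - φ r)) := by
        gcongr
        exact le_add_of_nonneg_right (sq_nonneg a)
    rw [sin_two_mul_sub_of_sin_eq_zero hc] at hmul
    linarith
  have hbot := tendsto_atBot_of_hasDerivAt_le_neg (h.hasDerivAt_flux ha)
    (neg_neg_of_pos (by positivity)) hderiv
  obtain ⟨r, hr, hr'⟩ := (hflux.and (hbot.eventually_lt_atBot k)).exists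
  linarith

theorem not_eventually_le_weightedEnergy (ha : a ≠ 0) (h : IsWormholeSolution a φ p)
    (hc : sin c = 0) (hlim : Tendsto φ atTop (nhds c)) (hp : ∀ r, 0 < p r) {δ : ℝ} (hδ : 0 < δ) :
    ¬ ∀ᶠ r in atTop, δ ≤ weightedEnergy a φ p r := by
  intro hK
  refine h.not_eventually_le_flux ha hc hlim (sqrt_pos.2 (by positivity : 0 < 2 * δ)) ?_
  filter_upwards [hK] with r hr
  have hpr := hp r
  refine sqrt_le_iff.2 ⟨by positivity, ?_⟩
  have hsin : 0 ≤ (r ^ 2 + a ^ 2) ^ 2 * sin (φ r) ^ 2 := by positivity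
  rw [weightedEnergy, wormholeEnergy] at hr
  linarith

/- Here `τ r` is the point where `g` takes the value `f r`, so that `f` at `r` and `g` at `τ r` are
compared at equal values of the field. -/
theorem le_sub_and_le_weightedEnergy_sub (ha : a ≠ 0) (hf : IsWormholeSolution a f p)
    (hg : IsWormholeSolution a g q) (hp : ∀ r, 0 < p r) (hq : ∀ r, 0 < q r)
    (hE : ∀ s, 0 ≤ s → 0 ≤ wormholeEnergy g q s) {τ : ℝ → ℝ} (hgτ : ∀ r, g (τ r) = f r)
    (hτ : ∀ r, HasDerivAt τ (p r / q (τ r)) r) (hτ₀ : 0 < τ 0)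
    (hK₀ : weightedEnergy a g q (τ 0) < weightedEnergy a f p 0) (hr : 0 ≤ r) :
    τ 0 ≤ τ r - r ∧ weightedEnergy a f p 0 - weightedEnergy a g q (τ 0)
      ≤ weightedEnergy a f p r - weightedEnergy a g q (τ r) := by
  have h := le_and_le_of_hasDerivAt_nonneg_of_pos (fun s => (hτ s).sub (hasDerivAt_id s))
    (fun s => (hf.hasDerivAt_weightedEnergy ha s).sub
      ((hg.hasDerivAt_weightedEnergy ha (τ s)).comp s (hτ s)))
    (by simpa using hτ₀) (sub_pos.2 hK₀) (fun s hs hτs hKs => ?_) hr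
  · simpa using h
  have hsτ : s ≤ τ s := (sub_pos.1 hτs).le
  have hqp : q (τ s) ≤ p s := deriv_le_of_energy_le (hgτ s) (hp s).le <|
    energy_le_of_weightedEnergy_le ha hs hsτ (hE _ (hs.trans hsτ)) (sub_pos.1 hKs).le
  have hspeed : 1 ≤ p s / q (τ s) := (one_le_div (hq _)).2 hqp
  refine ⟨sub_nonneg.2 hspeed, ?_⟩
  have hdecay : 4 * s * (s ^ 2 + a ^ 2) * sin (f s) ^ 2
      ≤ 4 * τ s * (τ s ^ 2 + a ^ 2) * sin (f s) ^ 2 * (p s / q (τ s)) := calc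
    4 * s * (s ^ 2 + a ^ 2) * sin (f s) ^ 2
        ≤ 4 * τ s * (τ s ^ 2 + a ^ 2) * sin (f s) ^ 2 := by
      have := hs.trans hsτ
      gcongr
    _ ≤ 4 * τ s * (τ s ^ 2 + a ^ 2) * sin (f s) ^ 2 * (p s / q (τ s)) := by
      have := hs.trans hsτ
      exact le_mul_of_one_le_right (by positivity) hspeed
  rw [hgτ]
  linarith

end IsWormholeSolution

/-- A kink: a solution running from a zero `b` of the sine at `-∞` to a zero `c` at `+∞`. The
`n`-kinks are the case `b = 0`, `c = nπ`. -/
structure IsKink (a b c : ℝ) (φ p : ℝ → ℝ) : Prop extends IsWormholeSolution a φ p where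
  sin_bot : sin b = 0
  sin_top : sin c = 0
  tendsto_bot : Tendsto φ atBot (nhds b)
  tendsto_top : Tendsto φ atTop (nhds c)

namespace IsKink

variable {a b c : ℝ} {φ p f g q : ℝ → ℝ}

theorem const_sub (h : IsKink a b c φ p) {d : ℝ} (hd : sin d = 0) :
    IsKink a (d - b) (d - c) (fun r => d - φ r) fun r => -p r where
  toIsWormholeSolution := h.toIsWormholeSolution.const_sub hd
  sin_bot := by rw [sin_sub_of_sin_eq_zero hd, h.sin_bot, mul_zero, neg_zero]
  sin_top := by rw [sin_sub_of_sin_eq_zero hd, h.sin_top, mul_zero, neg_zero]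
  tendsto_bot := h.tendsto_bot.const_sub d
  tendsto_top := h.tendsto_top.const_sub d

theorem comp_neg (h : IsKink a b c φ p) : IsKink a c b (fun r => φ (-r)) fun r => -p (-r) where
  toIsWormholeSolution := h.toIsWormholeSolution.comp_neg
  sin_bot := h.sin_top
  sin_top := h.sin_bot
  tendsto_bot := h.tendsto_top.comp tendsto_neg_atBot_atTop
  tendsto_top := h.tendsto_bot.comp tendsto_neg_atTop_atBot

theorem sin_add (h : IsKink a b c φ p) : sin (b + c) = 0 := by
  rw [Real.sin_add, h.sin_bot, h.sin_top, zero_mul, mul_zero, add_zero]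

theorem reflect (h : IsKink a b c φ p) :
    IsKink a b c (fun r => b + c - φ (-r)) fun r => p (-r) := by
  simpa using h.comp_neg.const_sub h.sin_add

theorem energy_pos (ha : a ≠ 0) (h : IsKink a b c φ p) (hφ : ¬ ∃ d, φ = fun _ => d) (r : ℝ) :
    0 < wormholeEnergy φ p r := by
  rcases le_total 0 r with hr | hr
  · exact (h.energy_nonneg h.sin_top h.tendsto_top hr).lt_of_ne' fun hE =>
      hφ (h.exists_eq_const_of_energy_eq_zero ha h.sin_top h.tendsto_top hr hE)
  · have hr := neg_nonneg.2 hr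
    have h' := h.comp_neg
    have hE : wormholeEnergy (fun r => φ (-r)) (fun r => -p (-r)) (-r) = wormholeEnergy φ p r := by
      simp [wormholeEnergy]
    rw [← hE]
    refine (h'.energy_nonneg h'.sin_top h'.tendsto_top hr).lt_of_ne' fun hE => hφ ?_
    obtain ⟨d, hd⟩ := h'.exists_eq_const_of_energy_eq_zero ha h'.sin_top h'.tendsto_top hr hE
    exact ⟨d, funext fun s => by simpa using congrFun hd (-s)⟩

theorem deriv_pos (ha : a ≠ 0) (h : IsKink a b c φ p) (hφ : ¬ ∃ d, φ = fun _ => d) (hbc : b ≤ c)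
    (r : ℝ) : 0 < p r := by
  have hne : ∀ r ∈ Set.univ, p r ≠ 0 := by
    intro r _ hp
    have hE := h.energy_pos ha hφ r
    rw [wormholeEnergy, hp] at hE
    linarith [sq_nonneg (sin (φ r))]
  rcases hasDerivWithinAt_forall_lt_or_forall_gt_of_forall_ne convex_univ
    (fun r _ => (h.hasDerivAt r).hasDerivWithinAt) hne with hneg | hpos
  · have hanti : StrictAnti φ := strictAnti_of_hasDerivAt_neg h.hasDerivAt fun r => hneg r trivial
    have hcb : c < b := calc
      c ≤ φ 1 := hanti.antitone.le_of_tendsto h.tendsto_top 1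
      _ < φ 0 := hanti one_pos
      _ ≤ b := hanti.antitone.ge_of_tendsto h.tendsto_bot 0
    exact absurd hbc hcb.not_ge
  · exact hpos r trivial

theorem mem_range (hf : IsKink a b c f p) (hg : IsKink a b c g q) (hp : ∀ r, 0 < p r) (r : ℝ) :
    f r ∈ Set.range g := by
  have hmono : StrictMono f := strictMono_of_hasDerivAt_pos hf.hasDerivAt hp
  have hbot : b < f r :=
    (hmono.monotone.le_of_tendsto hf.tendsto_bot (r - 1)).trans_lt (hmono (sub_one_lt r))
  have htop : f r < c :=
    (hmono (lt_add_one r)).trans_le (hmono.monotone.ge_of_tendsto hf.tendsto_top (r + 1))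
  have hcont : Continuous g := continuous_iff_continuousAt.2 fun r => (hg.hasDerivAt r).continuousAt
  obtain ⟨s, -, hs⟩ := isPreconnected_univ.intermediate_value_Ioo (l₁ := atBot) (l₂ := atTop)
    (by simp) (by simp) hcont.continuousOn hg.tendsto_bot hg.tendsto_top ⟨hbot, htop⟩
  exact ⟨s, hs⟩

theorem apply_zero_le_of_energy_le (ha : a ≠ 0) (hf : IsKink a b c f p) (hg : IsKink a b c g q)
    (hp : ∀ r, 0 < p r) (hq : ∀ r, 0 < q r)
    (hE : wormholeEnergy g q 0 ≤ wormholeEnergy f p 0) : f 0 ≤ g 0 := by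
  by_contra! hlt
  obtain ⟨τ, hgτ, hτ⟩ := exists_hasDerivAt_comp_eq hf.hasDerivAt hg.hasDerivAt
    hg.continuous_deriv hq (hf.mem_range hg hp)
  have hτ₀ : 0 < τ 0 := by
    rwa [← (strictMono_of_hasDerivAt_pos hg.hasDerivAt hq).lt_iff_lt, hgτ]
  have hK₀ : weightedEnergy a g q (τ 0) < weightedEnergy a f p 0 := calc
    weightedEnergy a g q (τ 0) < weightedEnergy a g q 0 :=
      hg.strictAntiOn_weightedEnergy ha hq Set.self_mem_Ici hτ₀.le hτ₀
    _ ≤ weightedEnergy a f p 0 := by rw [weightedEnergy, weightedEnergy]; gcongr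
  have hEg : ∀ s, 0 ≤ s → 0 ≤ wormholeEnergy g q s := fun s hs =>
    hg.energy_nonneg hg.sin_top hg.tendsto_top hs
  refine hf.not_eventually_le_weightedEnergy ha hf.sin_top hf.tendsto_top hp (sub_pos.2 hK₀) ?_
  filter_upwards [eventually_ge_atTop 0] with r hr
  obtain ⟨hτr, hKr⟩ := hf.le_sub_and_le_weightedEnergy_sub ha hg.toIsWormholeSolution hp hq hEg
    hgτ hτ hτ₀ hK₀ hr
  have hKg : 0 ≤ weightedEnergy a g q (τ r) := mul_nonneg (sq_nonneg _) (hEg _ (by linarith))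
  linarith

theorem add_comp_neg_eq_of_le (ha : a ≠ 0) (h : IsKink a b c φ p) (hbc : b ≤ c) (r : ℝ) :
    φ r + φ (-r) = b + c := by
  by_cases hφ : ∃ d, φ = fun _ => d
  · obtain ⟨d, rfl⟩ := hφ
    rw [tendsto_nhds_unique h.tendsto_bot tendsto_const_nhds,
      tendsto_nhds_unique h.tendsto_top tendsto_const_nhds]
  have hp : ∀ r, 0 < p r := h.deriv_pos ha hφ hbc
  have hE : wormholeEnergy (fun r => b + c - φ (-r)) (fun r => p (-r)) 0
      = wormholeEnergy φ p 0 := by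
    simp [wormholeEnergy, sin_sub_sq_of_sin_eq_zero h.sin_add]
  have h₀ : φ 0 = b + c - φ (-0) := le_antisymm
    (h.apply_zero_le_of_energy_le ha h.reflect hp (fun r => hp (-r)) hE.le)
    (h.reflect.apply_zero_le_of_energy_le ha h (fun r => hp (-r)) hp hE.ge)
  have heq : φ = fun r => b + c - φ (-r) :=
    h.eq_of_eq_at ha h.reflect.toIsWormholeSolution h₀ (by rw [neg_zero])
  exact eq_sub_iff_add_eq.1 (congrFun heq r)

end IsKink

theorem isKink_of_contDiff {a b c : ℝ} {φ : ℝ → ℝ} (hφ : ContDiff ℝ 2 φ)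
    (hφeq : ∀ r : ℝ, deriv (deriv φ) r + (2 * r / (r ^ 2 + a ^ 2)) * deriv φ r = sin (2 * φ r))
    (hb : sin b = 0) (hc : sin c = 0) (hbot : Tendsto φ atBot (nhds b))
    (htop : Tendsto φ atTop (nhds c)) : IsKink a b c φ (deriv φ) where
  hasDerivAt r := (hφ.differentiable two_ne_zero r).hasDerivAt
  hasDerivAt_deriv r := ((hφ.differentiable_deriv_two r).hasDerivAt).congr_deriv
    (eq_sub_of_add_eq (hφeq r))
  sin_bot := hb
  sin_top := hc
  tendsto_bot := hbot
  tendsto_top := htop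

theorem nkink_symmetric_general {a b c : ℝ} (ha : a ≠ 0) {φ p : ℝ → ℝ} (h : IsKink a b c φ p) :
    (∀ r : ℝ, φ r + φ (-r) = b + c) ∧ φ 0 = (b + c) / 2 := by
  have hsymm : ∀ r, φ r + φ (-r) = b + c := by
    intro r
    rcases le_total b c with hbc | hcb
    · exact h.add_comp_neg_eq_of_le ha hbc r
    · have := (h.const_sub sin_zero).add_comp_neg_eq_of_le ha (by linarith) r
      linarith
  have h₀ := hsymm 0
  rw [neg_zero] at h₀
  exact ⟨hsymm, by linarith⟩

/-- Any `n`-kink is symmetric with respect to its midpoint: `φ(r) + φ(−r) = nπ` for all `r`;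
in particular `φ(0) = nπ/2`. -/
theorem nkink_symmetric (a : ℝ) (ha : 0 < a) (n : ℕ) (hn : 0 < n)
    (φ : ℝ → ℝ)
    (hφ : ContDiff ℝ 2 φ)
    (hφeq : ∀ r : ℝ, deriv (deriv φ) r + (2 * r / (r ^ 2 + a ^ 2)) * deriv φ r
        = Real.sin (2 * φ r))
    (hφbot : Tendsto φ atBot (nhds 0))
    (hφtop : Tendsto φ atTop (nhds (n * Real.pi))) :
    (∀ r : ℝ, φ r + φ (-r) = n * Real.pi) ∧ φ 0 = n * Real.pi / 2 := by
  simpa using nkink_symmetric_general ha.ne'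
    (isKink_of_contDiff hφ hφeq sin_zero (sin_nat_mul_pi n) hφbot hφtop)
end

section
/- Let a > 0, let φ₁ : ℝ → ℝ be a 1-kink, and let H(r) = 2·arctan(exp(√2·r)) be the Sine-Gordon kink. Then φ₁(r) > H(r) for all r > 0, and φ₁(r) < H(r) for all r < 0. -/
open Real Filter

/-!
In the coordinate `y = log (tan (φ / 2))` the Sine-Gordon kink is the line `y = √2 r`, and the kink
equation becomes `y'' = -(y'² - 2) cos φ - D y'`. The energy `φ'² - 2 sin² φ` decreases away from
the origin and is at least `-2 sin² φ`, which tends to `0` at both ends, so it is nonnegative. This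
bounds `φ''` by a multiple of `φ'`, so `φ'` never vanishes; then the decrease is strict and the
energy is positive, which says exactly `y' > √2`. The theorem therefore reduces to `y 0 = 0`, i.e.
to the symmetry of `φ` at the throat.

If `y 0 > 0`, then `w r = y r + y (-r)` has `w 0 > 0`, `w' 0 = 0`, and solves `w'' = A + B w'`
with `A` of the same sign as `w`. Hence `w` and `w'` stay positive, and for large `r` the equation
gives `w'' ≥ θ w'²` with `θ > 0`, which blows up in finite time. The case `y 0 < 0` is the same
statement for the reflected kink `π - φ (-r)`.
-/

section Comparison

open Set

variable {u w k A B : ℝ → ℝ} {t₀ r : ℝ}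

theorem exists_integratingFactor (hB : Continuous B) :
    ∃ μ : ℝ → ℝ, (∀ r, 0 < μ r) ∧ ∀ {u : ℝ → ℝ} {c r : ℝ},
      HasDerivAt u (c + B r * u r) r → HasDerivAt (fun s ↦ u s * μ s) (c * μ r) r := by
  refine ⟨fun r ↦ exp (-∫ s in 0..r, B s), fun r ↦ exp_pos _, fun {u c r} hu ↦ ?_⟩
  have hμ : HasDerivAt (fun r ↦ exp (-∫ s in 0..r, B s)) (exp (-∫ s in 0..r, B s) * -B r) r :=
    (hB.integral_hasStrictDerivAt 0 r).hasDerivAt.neg.exp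
  exact (hu.mul hμ).congr_deriv (by ring)

-- Since `w * A ≥ 0`, the product `q = w * k` satisfies the first-order inequality `q' ≥ B * q`.
theorem mul_deriv_nonneg_of_sign_forcing (hB : Continuous B) (hw : ∀ r, HasDerivAt w (k r) r)
    (hk : ∀ r, HasDerivAt k (A r + B r * k r) r) (hA : ∀ r, w r ≠ 0 → 0 < w r * A r)
    (h₀ : 0 ≤ w t₀ * k t₀) (hr : t₀ ≤ r) : 0 ≤ w r * k r := by
  obtain ⟨μ, hμ, hderiv⟩ := exists_integratingFactor hB
  have hwA (s : ℝ) : 0 ≤ w s * A s := by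
    rcases eq_or_ne (w s) 0 with h | h
    · simp [h]
    · exact (hA s h).le
  have hmono : Monotone fun s ↦ w s * k s * μ s := by
    refine monotone_of_hasDerivAt_nonneg (f' := fun s ↦ (k s ^ 2 + w s * A s) * μ s)
      (fun s ↦ hderiv (((hw s).mul (hk s)).congr_deriv (by ring)))
      fun s ↦ mul_nonneg (add_nonneg (sq_nonneg _) (hwA s)) (hμ s).le
  exact nonneg_of_mul_nonneg_left ((mul_nonneg h₀ (hμ t₀).le).trans (hmono hr)) (hμ r)

theorem pos_of_sign_forcing (hB : Continuous B) (hw : ∀ r, HasDerivAt w (k r) r)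
    (hk : ∀ r, HasDerivAt k (A r + B r * k r) r) (hA : ∀ r, w r ≠ 0 → 0 < w r * A r)
    (hw₀ : 0 < w t₀) (hk₀ : 0 ≤ k t₀) (hr : t₀ ≤ r) : 0 < w r := by
  have hderiv (s : ℝ) : HasDerivAt (fun s ↦ w s ^ 2) (2 * (w s * k s)) s :=
    ((hw s).pow 2).congr_deriv (by push_cast; ring)
  have hcont : Continuous w := continuous_iff_continuousAt.2 fun s ↦ (hw s).continuousAt
  have hsq : MonotoneOn (fun s ↦ w s ^ 2) (Ici t₀) := by
    refine monotoneOn_of_hasDerivWithinAt_nonneg (convex_Ici t₀) (by fun_prop)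
      (fun s _ ↦ (hderiv s).hasDerivWithinAt) fun s hs ↦ ?_
    have := mul_deriv_nonneg_of_sign_forcing hB hw hk hA (mul_nonneg hw₀.le hk₀)
      (interior_subset hs)
    positivity
  by_contra! hneg
  obtain ⟨s, hs, hws⟩ := intermediate_value_Icc' hr hcont.continuousOn ⟨hneg, hw₀.le⟩
  have : w t₀ ^ 2 ≤ w s ^ 2 := hsq self_mem_Ici hs.1 hs.1
  rw [hws] at this
  nlinarith

theorem deriv_pos_of_sign_forcing (hB : Continuous B) (hw : ∀ r, HasDerivAt w (k r) r)
    (hk : ∀ r, HasDerivAt k (A r + B r * k r) r) (hA : ∀ r, w r ≠ 0 → 0 < w r * A r)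
    (hw₀ : 0 < w t₀) (hk₀ : 0 ≤ k t₀) (hr : t₀ < r) : 0 < k r := by
  obtain ⟨μ, hμ, hderiv⟩ := exists_integratingFactor hB
  have hmono : StrictMonoOn (fun s ↦ k s * μ s) (Ici t₀) := by
    refine strictMonoOn_of_hasDerivWithinAt_pos (convex_Ici t₀)
      (fun s _ ↦ (hderiv (hk s)).continuousAt.continuousWithinAt)
      (fun s _ ↦ (hderiv (hk s)).hasDerivWithinAt) fun s hs ↦ ?_
    have hws := pos_of_sign_forcing hB hw hk hA hw₀ hk₀ (interior_subset hs)
    exact mul_pos (pos_of_mul_pos_right (hA s hws.ne') hws.le) (hμ s)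
  have hlt := hmono self_mem_Ici hr.le hr
  exact pos_of_mul_pos_left ((mul_nonneg hk₀ (hμ t₀).le).trans_lt hlt) (hμ r).le

theorem not_forall_pos_of_mul_sq_le_deriv {u' : ℝ → ℝ} {θ R : ℝ} (hθ : 0 < θ)
    (hu : ∀ r, R ≤ r → HasDerivAt u (u' r) r) (hle : ∀ r, R ≤ r → θ * u r ^ 2 ≤ u' r) :
    ¬ ∀ r, R ≤ r → 0 < u r := by
  intro hpos
  have hderiv (r : ℝ) (hr : R ≤ r) :
      HasDerivAt (fun s ↦ (u s)⁻¹ + θ * s) (-u' r / u r ^ 2 + θ * 1) r :=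
    ((hu r hr).inv (hpos r hr).ne').add ((hasDerivAt_id r).const_mul θ)
  have hanti : AntitoneOn (fun s ↦ (u s)⁻¹ + θ * s) (Ici R) := by
    refine antitoneOn_of_hasDerivWithinAt_nonpos (convex_Ici R)
      (fun r hr ↦ (hderiv r hr).continuousAt.continuousWithinAt)
      (fun r hr ↦ (hderiv r (interior_subset hr)).hasDerivWithinAt) fun r hr ↦ ?_
    have hr' : R ≤ r := interior_subset hr
    have : θ ≤ u' r / u r ^ 2 := (le_div_iff₀ (pow_pos (hpos r hr') 2)).2 (hle r hr')
    rw [neg_div]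
    linarith
  have hR := hpos R le_rfl
  set T := R + (u R)⁻¹ / θ with hT
  have hRT : R ≤ T := le_add_of_nonneg_right (by positivity)
  have hle' : (u T)⁻¹ + θ * T ≤ (u R)⁻¹ + θ * R := hanti self_mem_Ici hRT hRT
  have hθT : θ * T = θ * R + (u R)⁻¹ := by rw [hT]; field_simp
  have := inv_pos.2 (hpos T hRT)
  linarith

end Comparison

section LogTanHalf

open Set

/-- The inverse `x ↦ log (tan (x / 2))` of `y ↦ 2 arctan (exp y)` on `(0, π)`; in this coordinate
the Sine-Gordon kink is `√2 r`. Its values outside `(0, π)` are irrelevant. -/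
noncomputable def logTanHalf (x : ℝ) : ℝ := log (tan (x / 2))

theorem logTanHalf_two_mul_arctan_exp (y : ℝ) : logTanHalf (2 * arctan (exp y)) = y := by
  rw [logTanHalf, mul_div_cancel_left₀ _ two_ne_zero, tan_arctan, log_exp]

theorem two_mul_arctan_exp_mem_Ioo (y : ℝ) : 2 * arctan (exp y) ∈ Ioo 0 π :=
  ⟨mul_pos two_pos (arctan_pos.2 (exp_pos y)), by linarith [arctan_lt_pi_div_two (exp y)]⟩

theorem logTanHalf_pi_sub (x : ℝ) : logTanHalf (π - x) = -logTanHalf x := by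
  rw [logTanHalf, sub_div, tan_pi_div_two_sub, log_inv, logTanHalf]

theorem hasDerivAt_logTanHalf {x : ℝ} (hx : x ∈ Ioo 0 π) :
    HasDerivAt logTanHalf (sin x)⁻¹ x := by
  have hcos : 0 < cos (x / 2) := cos_pos_of_mem_Ioo ⟨by linarith [hx.1, pi_pos], by linarith [hx.2]⟩
  have hsin : 0 < sin (x / 2) := sin_pos_of_pos_of_lt_pi (by linarith [hx.1])
    (by linarith [hx.2, pi_pos])
  have htan : tan (x / 2) ≠ 0 := by
    rw [tan_eq_sin_div_cos]
    positivity
  have hsin_double : sin x = 2 * sin (x / 2) * cos (x / 2) := by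
    rw [← sin_two_mul, mul_div_cancel₀ _ two_ne_zero]
  have hderiv : HasDerivAt (fun t ↦ tan (t / 2)) (1 / cos (x / 2) ^ 2 * (1 / 2)) x :=
    HasDerivAt.comp (h₂ := tan) x (hasDerivAt_tan hcos.ne') ((hasDerivAt_id x).div_const 2)
  refine (hderiv.log htan).congr_deriv ?_
  rw [hsin_double, tan_eq_sin_div_cos]
  field_simp

theorem strictMonoOn_logTanHalf : StrictMonoOn logTanHalf (Ioo 0 π) := by
  refine strictMonoOn_of_hasDerivWithinAt_pos (f' := fun x ↦ (sin x)⁻¹) (convex_Ioo 0 π)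
    (fun x hx ↦ (hasDerivAt_logTanHalf hx).continuousAt.continuousWithinAt) ?_ ?_
  · intro x hx
    exact (hasDerivAt_logTanHalf (interior_subset hx)).hasDerivWithinAt
  · intro x hx
    exact inv_pos.2 (sin_pos_of_mem_Ioo (interior_subset hx))

theorem logTanHalf_add_mul_neg_cos_sub_cos_pos {x z : ℝ} (hx : x ∈ Ioo 0 π) (hz : z ∈ Ioo 0 π)
    (hne : logTanHalf x + logTanHalf z ≠ 0) :
    0 < (logTanHalf x + logTanHalf z) * (-cos x - cos z) := by
  have hz' : π - z ∈ Ioo 0 π := ⟨by linarith [hz.2], by linarith [hz.1]⟩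
  have hlog : logTanHalf x + logTanHalf z = logTanHalf x - logTanHalf (π - z) := by
    rw [logTanHalf_pi_sub, sub_neg_eq_add]
  have hcos : -cos x - cos z = cos (π - z) - cos x := by
    rw [cos_pi_sub]
    ring
  rw [hlog] at hne ⊢
  rw [hcos]
  rcases lt_trichotomy x (π - z) with hlt | heq | hgt
  · exact mul_pos_of_neg_of_neg (sub_neg.2 (strictMonoOn_logTanHalf hx hz' hlt))
      (sub_neg.2 (strictAntiOn_cos (Ioo_subset_Icc_self hx) (Ioo_subset_Icc_self hz') hlt))
  · exact absurd (by rw [heq, sub_self]) hne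
  · exact mul_pos (sub_pos.2 (strictMonoOn_logTanHalf hz' hx hgt))
      (sub_pos.2 (strictAntiOn_cos (Ioo_subset_Icc_self hz') (Ioo_subset_Icc_self hx) hgt))

end LogTanHalf

/-- The damping coefficients `D` admitted in the kink equation `φ'' + D φ' = sin (2 φ)`, which is
that of the wormhole for `D r = 2 r / (r² + a²)`: energy dissipates away from the origin,
symmetrically in both directions. The bound `2√2` is twice the slope of the Sine-Gordon kink in the
`logTanHalf` coordinate; it makes the nonlinearity win over the damping near infinity. -/
structure IsDamping (D : ℝ → ℝ) : Prop where
  continuous : Continuous D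
  odd : Function.Odd D
  pos : ∀ r, 0 < r → 0 < D r
  eventually_le : ∃ b < 2 * √2, ∀ᶠ r in atTop, D r ≤ b

theorem isDamping_wormhole {a : ℝ} (ha : a ≠ 0) : IsDamping fun r ↦ 2 * r / (r ^ 2 + a ^ 2) where
  continuous := by fun_prop (disch := intro r; positivity)
  odd r := by simp only [neg_sq, mul_neg, neg_div]
  pos r hr := by positivity
  eventually_le := by
    refine ⟨1, by nlinarith [one_lt_sqrt_two], (eventually_ge_atTop 2).mono fun r hr ↦ ?_⟩
    rw [div_le_one (by positivity)]
    nlinarith [sq_nonneg a]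

/-- `φ` is a `1`-kink: a `C²` solution of `φ'' + D φ' = sin (2 φ)` which joins `0` to `π`. -/
structure IsKink_s10 (D φ : ℝ → ℝ) : Prop where
  contDiff : ContDiff ℝ 2 φ
  deriv_deriv_add : ∀ r, deriv (deriv φ) r + D r * deriv φ r = sin (2 * φ r)
  tendsto_atBot : Tendsto φ atBot (nhds 0)
  tendsto_atTop : Tendsto φ atTop (nhds π)

/-- The reflection `r ↦ π - φ (-r)`, which maps kinks to kinks. -/
noncomputable def kinkReflection (φ : ℝ → ℝ) (r : ℝ) : ℝ := π - φ (-r)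

/-- Twice the mechanical energy of `φ'' = sin (2 φ)`, normalised to vanish at the end states
`φ = 0` and `φ = π`. -/
noncomputable def kinkEnergy (φ : ℝ → ℝ) (r : ℝ) : ℝ := deriv φ r ^ 2 - 2 * sin (φ r) ^ 2

/-- The derivative of `logTanHalf ∘ φ` wherever `φ` takes values in `(0, π)`. -/
noncomputable def logTanSlope (φ : ℝ → ℝ) (r : ℝ) : ℝ := deriv φ r / sin (φ r)

/-- The even part (doubled) of `logTanHalf ∘ φ`; it vanishes when `φ` is its own reflection. -/
noncomputable def kinkAsymmetry (φ : ℝ → ℝ) (r : ℝ) : ℝ :=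
  logTanHalf (φ r) + logTanHalf (φ (-r))

/-- The derivative of `kinkAsymmetry φ` when `φ` is a kink. -/
noncomputable def kinkAsymmetrySlope (φ : ℝ → ℝ) (r : ℝ) : ℝ :=
  logTanSlope φ r - logTanSlope φ (-r)

/-- The term `A` in the equation `w'' = A + B w'` for `w = kinkAsymmetry φ`. -/
noncomputable def kinkAsymmetryForcing (φ : ℝ → ℝ) (r : ℝ) : ℝ :=
  (logTanSlope φ r ^ 2 - 2) * (-cos (φ r) - cos (φ (-r)))

/-- The coefficient `B` in the equation `w'' = A + B w'` for `w = kinkAsymmetry φ`. -/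
noncomputable def kinkAsymmetryRate (D φ : ℝ → ℝ) (r : ℝ) : ℝ :=
  cos (φ (-r)) * (logTanSlope φ r + logTanSlope φ (-r)) - D r

theorem deriv_kinkReflection (φ : ℝ → ℝ) (r : ℝ) :
    deriv (kinkReflection φ) r = deriv φ (-r) := by
  unfold kinkReflection
  rw [deriv_const_sub, deriv_comp_neg, neg_neg]

theorem kinkEnergy_kinkReflection (φ : ℝ → ℝ) (r : ℝ) :
    kinkEnergy (kinkReflection φ) r = kinkEnergy φ (-r) := by
  rw [kinkEnergy, deriv_kinkReflection, kinkReflection, sin_pi_sub, kinkEnergy]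

namespace IsKink_s10

variable {D φ : ℝ → ℝ}

theorem reflection (hD : Function.Odd D) (h : IsKink_s10 D φ) : IsKink_s10 D (kinkReflection φ) where
  contDiff := contDiff_const.sub (h.contDiff.comp contDiff_neg)
  deriv_deriv_add r := by
    have hderiv : deriv (kinkReflection φ) = fun s ↦ deriv φ (-s) :=
      funext (deriv_kinkReflection φ)
    have heq := h.deriv_deriv_add (-r)
    rw [hD r] at heq
    rw [hderiv, deriv_comp_neg, kinkReflection, mul_sub, sin_two_pi_sub, ← heq]
    ring
  tendsto_atBot := by
    have hlim := (h.tendsto_atTop.comp tendsto_neg_atBot_atTop).const_sub π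
    rwa [sub_self] at hlim
  tendsto_atTop := by
    have hlim := (h.tendsto_atBot.comp tendsto_neg_atTop_atBot).const_sub π
    rwa [sub_zero] at hlim

theorem hasDerivAt (h : IsKink_s10 D φ) (r : ℝ) : HasDerivAt φ (deriv φ r) r :=
  (h.contDiff.differentiable two_ne_zero r).hasDerivAt

theorem hasDerivAt_deriv (h : IsKink_s10 D φ) (r : ℝ) :
    HasDerivAt (deriv φ) (sin (2 * φ r) - D r * deriv φ r) r := by
  have hdiff : Differentiable ℝ (deriv φ) := h.contDiff.differentiable_deriv_two
  exact (hdiff r).hasDerivAt.congr_deriv (eq_sub_of_add_eq (h.deriv_deriv_add r))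

theorem hasDerivAt_kinkEnergy (h : IsKink_s10 D φ) (r : ℝ) :
    HasDerivAt (kinkEnergy φ) (-(2 * D r * deriv φ r ^ 2)) r := by
  refine (((h.hasDerivAt_deriv r).pow 2).sub
    (((h.hasDerivAt r).sin.pow 2).const_mul 2)).congr_deriv ?_
  rw [sin_two_mul]
  push_cast
  ring

theorem kinkEnergy_nonneg_of_nonneg (hD : IsDamping D) (h : IsKink_s10 D φ) {r : ℝ} (hr : 0 ≤ r) :
    0 ≤ kinkEnergy φ r := by
  have hanti : AntitoneOn (kinkEnergy φ) (Set.Ici 0) := by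
    refine antitoneOn_of_hasDerivWithinAt_nonpos (convex_Ici 0)
      (fun s _ ↦ (h.hasDerivAt_kinkEnergy s).continuousAt.continuousWithinAt)
      (fun s _ ↦ (h.hasDerivAt_kinkEnergy s).hasDerivWithinAt) fun s hs ↦ ?_
    have := hD.pos s (interior_Ici.subset hs)
    exact neg_nonpos.2 (by positivity)
  have hsin : Tendsto (fun s ↦ -(2 * sin (φ s) ^ 2)) atTop (nhds 0) := by
    simpa using ((((continuous_sin.tendsto π).comp h.tendsto_atTop).pow 2).const_mul 2).neg
  refine le_of_tendsto hsin ((eventually_ge_atTop r).mono fun s hs ↦ ?_)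
  calc -(2 * sin (φ s) ^ 2) ≤ kinkEnergy φ s := by
        rw [kinkEnergy]
        linarith [sq_nonneg (deriv φ s)]
    _ ≤ kinkEnergy φ r := hanti hr (hr.trans hs) hs

theorem kinkEnergy_nonneg (hD : IsDamping D) (h : IsKink_s10 D φ) (r : ℝ) : 0 ≤ kinkEnergy φ r := by
  rcases le_total 0 r with hr | hr
  · exact h.kinkEnergy_nonneg_of_nonneg hD hr
  · have := (h.reflection hD.odd).kinkEnergy_nonneg_of_nonneg hD (neg_nonneg.2 hr)
    rwa [kinkEnergy_kinkReflection, neg_neg] at this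

theorem abs_sin_two_mul_le (hD : IsDamping D) (h : IsKink_s10 D φ) (r : ℝ) :
    |sin (2 * φ r)| ≤ 2 * |deriv φ r| := by
  have hE := h.kinkEnergy_nonneg hD r
  have hsin : |sin (φ r)| ≤ |deriv φ r| := by
    rw [kinkEnergy] at hE
    exact sq_le_sq.1 (by linarith [sq_nonneg (sin (φ r))])
  calc |sin (2 * φ r)| = 2 * |sin (φ r)| * |cos (φ r)| := by
        rw [sin_two_mul, abs_mul, abs_mul, abs_two]
    _ ≤ 2 * |sin (φ r)| * 1 := by gcongr; exact abs_cos_le_one _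
    _ ≤ 2 * |deriv φ r| := by linarith

theorem deriv_eq_zero_of_le (hD : IsDamping D) (h : IsKink_s10 D φ) {r s : ℝ} (hr : deriv φ r = 0)
    (hs : r ≤ s) : deriv φ s = 0 := by
  obtain ⟨M, hM⟩ := isCompact_Icc.exists_bound_of_continuousOn (s := Set.Icc r s)
    hD.continuous.continuousOn
  refine eq_zero_of_abs_deriv_le_mul_abs_self_of_eq_zero_right (K := 2 + M)
    (fun t _ ↦ (h.hasDerivAt_deriv t).continuousAt.continuousWithinAt)
    (fun t _ ↦ (h.hasDerivAt_deriv t).hasDerivWithinAt) hr (fun t ht ↦ ?_) s ⟨hs, le_rfl⟩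
  calc ‖sin (2 * φ t) - D t * deriv φ t‖ ≤ ‖sin (2 * φ t)‖ + ‖D t‖ * ‖deriv φ t‖ := by
        rw [← norm_mul]
        exact norm_sub_le _ _
    _ ≤ 2 * ‖deriv φ t‖ + M * ‖deriv φ t‖ := by
        gcongr
        · exact h.abs_sin_two_mul_le hD t
        · exact hM t (Set.Ico_subset_Icc_self ht)
    _ = (2 + M) * ‖deriv φ t‖ := by ring

theorem deriv_ne_zero (hD : IsDamping D) (h : IsKink_s10 D φ) (r : ℝ) : deriv φ r ≠ 0 := by
  intro hr
  have hzero (s : ℝ) : deriv φ s = 0 := by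
    rcases le_total r s with hs | hs
    · exact h.deriv_eq_zero_of_le hD hr hs
    · have hr' : deriv (kinkReflection φ) (-r) = 0 := by
        rwa [deriv_kinkReflection, neg_neg]
      have := (h.reflection hD.odd).deriv_eq_zero_of_le hD hr' (neg_le_neg hs)
      rwa [deriv_kinkReflection, neg_neg] at this
  have hconst : φ = fun _ ↦ φ 0 := funext fun s ↦
    is_const_of_deriv_eq_zero (fun t ↦ (h.hasDerivAt t).differentiableAt) hzero s 0
  have hbot := h.tendsto_atBot
  have htop := h.tendsto_atTop
  rw [hconst, tendsto_const_nhds_iff] at hbot htop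
  exact pi_ne_zero (htop.symm.trans hbot)

theorem deriv_pos_s10 (hD : IsDamping D) (h : IsKink_s10 D φ) (r : ℝ) : 0 < deriv φ r := by
  rcases hasDerivWithinAt_forall_lt_or_forall_gt_of_forall_ne convex_univ
    (fun s _ ↦ (h.hasDerivAt s).hasDerivWithinAt) (fun s _ ↦ h.deriv_ne_zero hD s) with hneg | hpos
  · have hanti : Antitone φ :=
      antitone_of_hasDerivAt_nonpos h.hasDerivAt fun s ↦ (hneg s trivial).le
    have htop := hanti.le_of_tendsto h.tendsto_atTop 0
    have hbot := hanti.ge_of_tendsto h.tendsto_atBot 0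
    linarith [pi_pos]
  · exact hpos r trivial

theorem mem_Ioo (hD : IsDamping D) (h : IsKink_s10 D φ) (r : ℝ) : φ r ∈ Set.Ioo 0 π := by
  have hmono : StrictMono φ := strictMono_of_hasDerivAt_pos h.hasDerivAt (h.deriv_pos_s10 hD)
  exact ⟨(hmono.monotone.le_of_tendsto h.tendsto_atBot (r - 1)).trans_lt (hmono (sub_one_lt r)),
    (hmono (lt_add_one r)).trans_le (hmono.monotone.ge_of_tendsto h.tendsto_atTop (r + 1))⟩

theorem kinkEnergy_pos_of_nonneg (hD : IsDamping D) (h : IsKink_s10 D φ) {r : ℝ} (hr : 0 ≤ r) :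
    0 < kinkEnergy φ r := by
  have hanti : StrictAntiOn (kinkEnergy φ) (Set.Ici 0) := by
    refine strictAntiOn_of_hasDerivWithinAt_neg (convex_Ici 0)
      (fun s _ ↦ (h.hasDerivAt_kinkEnergy s).continuousAt.continuousWithinAt)
      (fun s _ ↦ (h.hasDerivAt_kinkEnergy s).hasDerivWithinAt) fun s hs ↦ ?_
    have := hD.pos s (interior_Ici.subset hs)
    have := h.deriv_pos_s10 hD s
    exact neg_neg_iff_pos.2 (by positivity)
  have hr' : r + 1 ∈ Set.Ici (0 : ℝ) := add_nonneg hr zero_le_one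
  exact (h.kinkEnergy_nonneg hD (r + 1)).trans_lt (hanti hr hr' (lt_add_one r))

theorem kinkEnergy_pos (hD : IsDamping D) (h : IsKink_s10 D φ) (r : ℝ) : 0 < kinkEnergy φ r := by
  rcases le_total 0 r with hr | hr
  · exact h.kinkEnergy_pos_of_nonneg hD hr
  · have := (h.reflection hD.odd).kinkEnergy_pos_of_nonneg hD (neg_nonneg.2 hr)
    rwa [kinkEnergy_kinkReflection, neg_neg] at this

theorem sin_pos (hD : IsDamping D) (h : IsKink_s10 D φ) (r : ℝ) : 0 < sin (φ r) :=
  sin_pos_of_mem_Ioo (h.mem_Ioo hD r)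

theorem sqrt_two_lt_logTanSlope (hD : IsDamping D) (h : IsKink_s10 D φ) (r : ℝ) :
    √2 < logTanSlope φ r := by
  have hE := h.kinkEnergy_pos hD r
  rw [kinkEnergy] at hE
  rw [logTanSlope, lt_div_iff₀ (h.sin_pos hD r)]
  refine lt_of_pow_lt_pow_left₀ 2 (h.deriv_pos_s10 hD r).le ?_
  rw [mul_pow, sq_sqrt zero_le_two]
  linarith

theorem hasDerivAt_logTanHalf_comp (hD : IsDamping D) (h : IsKink_s10 D φ) (r : ℝ) :
    HasDerivAt (fun s ↦ logTanHalf (φ s)) (logTanSlope φ r) r :=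
  ((hasDerivAt_logTanHalf (h.mem_Ioo hD r)).comp r (h.hasDerivAt r)).congr_deriv
    (inv_mul_eq_div _ _)

theorem hasDerivAt_logTanSlope (hD : IsDamping D) (h : IsKink_s10 D φ) (r : ℝ) :
    HasDerivAt (logTanSlope φ)
      ((logTanSlope φ r ^ 2 - 2) * -cos (φ r) - D r * logTanSlope φ r) r := by
  have hsin := (h.sin_pos hD r).ne'
  refine ((h.hasDerivAt_deriv r).div (h.hasDerivAt r).sin hsin).congr_deriv ?_
  rw [sin_two_mul, logTanSlope]
  field_simp
  ring

theorem hasDerivAt_kinkAsymmetry (hD : IsDamping D) (h : IsKink_s10 D φ) (r : ℝ) :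
    HasDerivAt (kinkAsymmetry φ) (kinkAsymmetrySlope φ r) r :=
  ((h.hasDerivAt_logTanHalf_comp hD r).add
    ((h.hasDerivAt_logTanHalf_comp hD (-r)).comp r (hasDerivAt_neg r))).congr_deriv
      (by rw [kinkAsymmetrySlope]; ring)

theorem hasDerivAt_kinkAsymmetrySlope (hD : IsDamping D) (h : IsKink_s10 D φ) (r : ℝ) :
    HasDerivAt (kinkAsymmetrySlope φ)
      (kinkAsymmetryForcing φ r + kinkAsymmetryRate D φ r * kinkAsymmetrySlope φ r) r := by
  refine ((h.hasDerivAt_logTanSlope hD r).sub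
    ((h.hasDerivAt_logTanSlope hD (-r)).comp r (hasDerivAt_neg r))).congr_deriv ?_
  rw [hD.odd r, kinkAsymmetryForcing, kinkAsymmetryRate, kinkAsymmetrySlope]
  ring

theorem kinkAsymmetry_mul_kinkAsymmetryForcing_pos (hD : IsDamping D) (h : IsKink_s10 D φ) (r : ℝ)
    (hne : kinkAsymmetry φ r ≠ 0) : 0 < kinkAsymmetry φ r * kinkAsymmetryForcing φ r := by
  have hslope : 0 < logTanSlope φ r ^ 2 - 2 :=
    sub_pos.2 (lt_sq_of_sqrt_lt (h.sqrt_two_lt_logTanSlope hD r))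
  rw [kinkAsymmetryForcing, mul_left_comm]
  exact mul_pos hslope
    (logTanHalf_add_mul_neg_cos_sub_cos_pos (h.mem_Ioo hD r) (h.mem_Ioo hD (-r)) hne)

theorem continuous_kinkAsymmetryRate (hD : IsDamping D) (h : IsKink_s10 D φ) :
    Continuous (kinkAsymmetryRate D φ) := by
  have hφ : Continuous φ := h.contDiff.continuous
  have hslope : Continuous (logTanSlope φ) :=
    continuous_iff_continuousAt.2 fun r ↦ (h.hasDerivAt_logTanSlope hD r).continuousAt
  have := hD.continuous
  unfold kinkAsymmetryRate
  fun_prop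

theorem exists_eventually_mul_kinkAsymmetrySlope_le (hD : IsDamping D) (h : IsKink_s10 D φ) :
    ∃ θ > 0, ∀ᶠ r in atTop, θ * kinkAsymmetrySlope φ r ≤ kinkAsymmetryRate D φ r := by
  obtain ⟨b, hb, hDb⟩ := hD.eventually_le
  obtain ⟨θ, hθ, hθ1⟩ : ∃ θ, max 0 (b / (2 * √2)) < θ ∧ θ < 1 :=
    exists_between (max_lt one_pos ((div_lt_one (by positivity)).2 hb))
  have hθ0 : 0 < θ := (le_max_left _ _).trans_lt hθ
  have hbθ : b < θ * (2 * √2) := (div_lt_iff₀ (by positivity)).1 ((le_max_right _ _).trans_lt hθ)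
  have hcos : Tendsto (fun r ↦ cos (φ (-r))) atTop (nhds 1) := by
    have hlim := (continuous_cos.tendsto 0).comp (h.tendsto_atBot.comp tendsto_neg_atTop_atBot)
    rwa [cos_zero] at hlim
  refine ⟨θ, hθ0, ?_⟩
  filter_upwards [hDb, hcos.eventually_const_le hθ1] with r hDr hcosr
  have hv := h.sqrt_two_lt_logTanSlope hD r
  have hv' := h.sqrt_two_lt_logTanSlope hD (-r)
  have hsum : 0 ≤ logTanSlope φ r + logTanSlope φ (-r) := by linarith [sqrt_nonneg 2]
  calc θ * kinkAsymmetrySlope φ r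
      ≤ θ * (kinkAsymmetrySlope φ r + 2 * logTanSlope φ (-r)) - θ * (2 * √2) := by nlinarith
    _ ≤ θ * (logTanSlope φ r + logTanSlope φ (-r)) - D r := by
        rw [kinkAsymmetrySlope]
        linarith
    _ ≤ kinkAsymmetryRate D φ r := sub_le_sub_right (mul_le_mul_of_nonneg_right hcosr hsum) _

theorem logTanHalf_zero_nonpos (hD : IsDamping D) (h : IsKink_s10 D φ) : logTanHalf (φ 0) ≤ 0 := by
  by_contra! hpos
  have hB := h.continuous_kinkAsymmetryRate hD
  have hw := h.hasDerivAt_kinkAsymmetry hD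
  have hk := h.hasDerivAt_kinkAsymmetrySlope hD
  have hA := h.kinkAsymmetry_mul_kinkAsymmetryForcing_pos hD
  have hw₀ : 0 < kinkAsymmetry φ 0 := by
    rw [kinkAsymmetry, neg_zero]
    exact add_pos hpos hpos
  have hk₀ : 0 ≤ kinkAsymmetrySlope φ 0 := by rw [kinkAsymmetrySlope, neg_zero, sub_self]
  obtain ⟨θ, hθ, hrate⟩ := h.exists_eventually_mul_kinkAsymmetrySlope_le hD
  obtain ⟨R, hR⟩ := eventually_atTop.1 (hrate.and (eventually_gt_atTop 0))
  have hkpos (r : ℝ) (hr : R ≤ r) : 0 < kinkAsymmetrySlope φ r :=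
    deriv_pos_of_sign_forcing hB hw hk hA hw₀ hk₀ (hR r hr).2
  refine not_forall_pos_of_mul_sq_le_deriv hθ (fun r _ ↦ hk r) (fun r hr ↦ ?_) hkpos
  have hwr := pos_of_sign_forcing hB hw hk hA hw₀ hk₀ (hR r hr).2.le
  have hforcing : 0 < kinkAsymmetryForcing φ r := pos_of_mul_pos_right (hA r hwr.ne') hwr.le
  calc θ * kinkAsymmetrySlope φ r ^ 2
      = θ * kinkAsymmetrySlope φ r * kinkAsymmetrySlope φ r := by ring
    _ ≤ kinkAsymmetryRate D φ r * kinkAsymmetrySlope φ r :=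
        mul_le_mul_of_nonneg_right (hR r hr).1 (hkpos r hr).le
    _ ≤ _ := le_add_of_nonneg_left hforcing.le

theorem logTanHalf_zero (hD : IsDamping D) (h : IsKink_s10 D φ) : logTanHalf (φ 0) = 0 := by
  have hrefl := (h.reflection hD.odd).logTanHalf_zero_nonpos hD
  rw [kinkReflection, neg_zero, logTanHalf_pi_sub, neg_nonpos] at hrefl
  exact (h.logTanHalf_zero_nonpos hD).antisymm hrefl

theorem strictMono_logTanHalf_sub (hD : IsDamping D) (h : IsKink_s10 D φ) :
    StrictMono fun r ↦ logTanHalf (φ r) - √2 * r :=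
  strictMono_of_hasDerivAt_pos
    (fun r ↦ (h.hasDerivAt_logTanHalf_comp hD r).sub ((hasDerivAt_id r).const_mul √2))
    fun r ↦ by linarith [h.sqrt_two_lt_logTanSlope hD r]

end IsKink_s10

theorem one_kink_above_H_general {D φ : ℝ → ℝ} (hD : IsDamping D) (h : IsKink_s10 D φ) :
    (∀ r, 0 < r → 2 * arctan (exp (√2 * r)) < φ r) ∧
      ∀ r, r < 0 → φ r < 2 * arctan (exp (√2 * r)) := by
  have hmono := h.strictMono_logTanHalf_sub hD
  have hzero := h.logTanHalf_zero hD
  refine ⟨fun r hr ↦ ?_, fun r hr ↦ ?_⟩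
  · refine (strictMonoOn_logTanHalf.lt_iff_lt (two_mul_arctan_exp_mem_Ioo _) (h.mem_Ioo hD r)).1 ?_
    have := hmono hr
    simp only [hzero, mul_zero, sub_zero] at this
    rw [logTanHalf_two_mul_arctan_exp]
    linarith
  · refine (strictMonoOn_logTanHalf.lt_iff_lt (h.mem_Ioo hD r) (two_mul_arctan_exp_mem_Ioo _)).1 ?_
    have := hmono hr
    simp only [hzero, mul_zero, sub_zero] at this
    rw [logTanHalf_two_mul_arctan_exp]
    linarith

/-- Comparison of the `1`-kink with the Sine-Gordon kink `H(r) = 2·arctan(exp(√2·r))`: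
`φ₁(r) > H(r)` for `r > 0` and `φ₁(r) < H(r)` for `r < 0`. -/
theorem one_kink_above_H (a : ℝ) (ha : 0 < a) (φ₁ H : ℝ → ℝ)
    (hH : ∀ r, H r = 2 * Real.arctan (Real.exp (Real.sqrt 2 * r)))
    (hφ : ContDiff ℝ 2 φ₁)
    (hφeq : ∀ r : ℝ, deriv (deriv φ₁) r + (2 * r / (r ^ 2 + a ^ 2)) * deriv φ₁ r
        = Real.sin (2 * φ₁ r))
    (hbot : Tendsto φ₁ atBot (nhds 0))
    (htop : Tendsto φ₁ atTop (nhds Real.pi)) :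
    (∀ r : ℝ, 0 < r → H r < φ₁ r) ∧ (∀ r : ℝ, r < 0 → φ₁ r < H r) := by
  simpa only [hH] using
    one_kink_above_H_general (isDamping_wormhole ha.ne') ⟨hφ, hφeq, hbot, htop⟩
end
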